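/- arXiv:1603.06625 — 3 statements merged into one kernel-verified Lean document; each statement's English description precedes it below -/
import Mathlib

section
/- Let N = 2n be a positive even integer and let d_1, ..., d_n be units of Z/N (equivalently, odd residues mod 2n). Then there exists a partition of Z/N into n pairs such that the differences of the pairs are exactly d_1, ..., d_n (in some order, where the difference of a pair {a,b} is a - b or b - a). -/
/-- Core of M. Hall's exchange argument. -/
theorem hall_step {G ι : Type*} [AddCommGroup G] [Fintype G] [DecidableEq G]
    (c : ι → G) (m : ℕ) :
    ∀ (V : Finset G) (p : Equiv.Perm G) (s : G ≃ ι) (u v : G),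
      Fintype.card G ≤ V.card + m → u ≠ v → u ∉ V → v ∉ V →
      (∀ x, x ≠ u → x ≠ v → x + c (s x) = p x) →
      u + v + c (s u) + c (s v) = p u + p v →
      (∀ x ∈ V, ∃ x' ∈ insert u V, p x = u + v + c (s u) - x') →
      ∃ (p' : Equiv.Perm G) (s' : G ≃ ι), ∀ x, x + c (s' x) = p' x := by
  induction m with
  | zero =>
    intro V p s u v hm _ hu
    exfalso
    have h1 : V = Finset.univ := by
      apply Finset.eq_univ_of_card
      have := Finset.card_le_univ V
      omega
    exact hu (h1 ▸ Finset.mem_univ u)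
  | succ m ih =>
    intro V p s u v hm huv hu hv hx hs hV
    obtain ⟨w, hw⟩ := p.surjective (u + c (s u))
    by_cases hwu : w = u
    · refine ⟨p, s, fun x => ?_⟩
      subst hwu
      by_cases h1 : x = w
      · subst h1; exact hw.symm
      by_cases h2 : x = v
      · subst h2
        rw [hw] at hs
        have : (w + c (s w)) + (x + c (s x)) = (w + c (s w)) + p x := by
          rw [← hs]; abel
        exact add_left_cancel this
      · exact hx x h1 h2
    by_cases hwv : w = v
    · subst hwv
      refine ⟨(Equiv.swap u w).trans p, s, fun x => ?_⟩
      by_cases h1 : x = u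
      · subst h1; simp [hw]
      by_cases h2 : x = w
      · subst h2
        simp only [Equiv.trans_apply, Equiv.swap_apply_right]
        rw [hw] at hs
        have : (u + c (s u)) + (x + c (s x)) = (u + c (s u)) + p u := by
          rw [add_comm _ (p u), ← hs]; abel
        exact add_left_cancel this
      · simp only [Equiv.trans_apply, Equiv.swap_apply_of_ne_of_ne h1 h2]
        exact hx x h1 h2
    have hww := hx w hwu hwv
    have hwV : w ∉ V := by
      intro h
      obtain ⟨x', hx', h2⟩ := hV w h
      have h3 : x' = v := by
        rw [hw] at h2
        have : x' = (u + v + c (s u)) - (u + c (s u)) := by rw [h2]; abel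
        rw [this]; abel
      subst h3
      rcases Finset.mem_insert.1 hx' with h4 | h4
      · exact huv h4.symm
      · exact hv h4
    refine ih (insert u V) ((Equiv.swap u w).trans p) ((Equiv.swap v w).trans s) v w
      ?_ (Ne.symm hwv) ?_ ?_ ?_ ?_ ?_
    · rw [Finset.card_insert_of_notMem hu]; omega
    · simp [Ne.symm huv, hv]
    · simp [hwu, hwV]
    · intro x h1 h2
      simp only [Equiv.trans_apply, Equiv.swap_apply_of_ne_of_ne h1 h2]
      by_cases h3 : x = u
      · subst h3; simp [hw]
      · rw [Equiv.swap_apply_of_ne_of_ne h3 h2]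
        exact hx x h3 h1
    · simp only [Equiv.trans_apply, Equiv.swap_apply_left, Equiv.swap_apply_right,
        Equiv.swap_apply_of_ne_of_ne (Ne.symm huv) (Ne.symm hwv)]
      have : v + w + c (s w) + c (s v) = v + (w + c (s w)) + c (s v) := by abel
      rw [this, hww, hw, add_comm (p v), ← hs]; abel
    · have hS : v + w + c (s w) = u + v + c (s u) := by
        have : v + w + c (s w) = v + (w + c (s w)) := by abel
        rw [this, hww, hw]; abel
      simp only [Equiv.trans_apply, Equiv.swap_apply_left, hS]
      intro x hxm
      by_cases h1 : x = u
      · subst h1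
        refine ⟨v, Finset.mem_insert_self _ _, ?_⟩
        rw [Equiv.swap_apply_left, hw]; abel
      · have h2 : x ∈ V := (Finset.mem_insert.1 hxm).resolve_left h1
        have h3 : x ≠ w := fun h => hwV (h ▸ h2)
        obtain ⟨x', hx', h4⟩ := hV x h2
        exact ⟨x', Finset.mem_insert_of_mem hx', by
          rw [Equiv.swap_apply_of_ne_of_ne h1 h3, h4]⟩

/-- M. Hall's theorem on differences of permutations of a finite abelian group. -/
theorem hall_perm {G ι : Type*} [AddCommGroup G] [Fintype G] [DecidableEq G] [Fintype ι]
    [DecidableEq ι] (e : G ≃ ι) (c : ι → G) (hc : ∑ i, c i = 0) :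
    ∃ (p : Equiv.Perm G) (s : G ≃ ι), ∀ x, x + c (s x) = p x := by
  let i0 : ι := e 0
  let f : Finset ι → ι → G := fun T i =>
    if i = i0 then - ∑ j ∈ T, c j else if i ∈ T then c i else 0
  have key : ∀ T : Finset ι, i0 ∉ T →
      ∃ (p : Equiv.Perm G) (s : G ≃ ι), ∀ x, x + f T (s x) = p x := by
    intro T
    induction T using Finset.induction_on with
    | empty =>
      intro _
      exact ⟨Equiv.refl _, e, fun x => by simp [f]⟩
    | insert j T hj ih =>
      intro h0
      have hji : j ≠ i0 := fun h => h0 (h ▸ Finset.mem_insert_self _ _)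
      obtain ⟨p, s, hps⟩ := ih (fun h => h0 (Finset.mem_insert_of_mem h))
      refine hall_step (f (insert j T)) (Fintype.card G) ∅ p s (s.symm j) (s.symm i0)
        (by simp) (by simpa using hji) (by simp) (by simp) ?_ ?_ (by simp)
      · intro x h1 h2
        rw [← hps x]
        have h1' : s x ≠ j := fun h => h1 (by simp [← h])
        have h2' : s x ≠ i0 := fun h => h2 (by simp [← h])
        simp [f, h1', h2']
      · rw [← hps, ← hps]
        simp [f, hji, hj]
        abel
  obtain ⟨p, s, h⟩ := key (Finset.univ.erase i0) (by simp)
  refine ⟨p, s, fun x => ?_⟩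
  rw [← h x]
  congr 1
  simp only [f]
  split_ifs with h1 h2
  · rw [h1, eq_neg_iff_add_eq_zero, Finset.add_sum_erase _ _ (Finset.mem_univ _), hc]
  · rfl
  · simp [h1] at h2

theorem closed_univ {n : ℕ} [NeZero n] (A : Finset (ZMod n)) (hA : A.Nonempty) (u : ZMod n)
    (hu : IsUnit u) (h : ∀ x ∈ A, x + u ∈ A) : A = Finset.univ := by
  obtain ⟨a, ha⟩ := hA
  have h1 : ∀ k : ℕ, a + k * u ∈ A := by
    intro k
    induction k with
    | zero => simpa using ha
    | succ k ih =>
      have := h _ ih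
      convert this using 1
      push_cast; ring
  ext t
  simp only [Finset.mem_univ, iff_true]
  obtain ⟨v, hv⟩ := hu.exists_left_inv
  have := h1 ((t - a) * v).val
  rw [ZMod.natCast_val, ZMod.cast_id', id, mul_assoc, hv] at this
  simpa using this

theorem subset_sums {n : ℕ} [NeZero n] {ι : Type*} [DecidableEq ι] (D : ι → ZMod n)
    (hD : ∀ i, IsUnit (D i)) (T : Finset ι) :
    min n (T.card + 1) ≤ (T.powerset.image (fun s => ∑ i ∈ s, D i)).card := by
  induction T using Finset.induction_on with
  | empty => simp
  | insert j T hj ih =>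
    set A := T.powerset.image (fun s => ∑ i ∈ s, D i) with hA
    set B := (insert j T).powerset.image (fun s => ∑ i ∈ s, D i) with hB
    have hAB : A ⊆ B := Finset.image_subset_image
      (Finset.powerset_mono.2 (Finset.subset_insert _ _))
    have hAB2 : ∀ x ∈ A, x + D j ∈ B := by
      intro x hx
      obtain ⟨s, hs, rfl⟩ := Finset.mem_image.1 hx
      have hs' := Finset.mem_powerset.1 hs
      refine Finset.mem_image.2 ⟨insert j s, Finset.mem_powerset.2
        (Finset.insert_subset_insert _ hs'), ?_⟩
      rw [Finset.sum_insert (fun h => hj (hs' h)), add_comm]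
    rw [Finset.card_insert_of_notMem hj]
    by_cases hcard : A.card < B.card
    · omega
    · have hEq : A = B := Finset.eq_of_subset_of_card_le hAB (by omega)
      have : A = Finset.univ := closed_univ A ⟨0, Finset.mem_image.2 ⟨∅, by simp, by simp⟩⟩
        (D j) (hD j) (fun x hx => hEq ▸ hAB2 x hx)
      rw [← hEq, this, Finset.card_univ, ZMod.card]
      omega

theorem seating_couples_even (n : ℕ) (hn : 0 < n) (d : Fin n → ZMod (2 * n))
    (hd : ∀ i, IsUnit (d i)) :
    ∃ (a b : Fin n → ZMod (2 * n)) (σ : Equiv.Perm (Fin n)),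
      Function.Bijective (Sum.elim a b) ∧
      ∀ i, a i - b i = d (σ i) ∨ b i - a i = d (σ i) := by
  have : NeZero n := ⟨hn.ne'⟩
  have : NeZero (2 * n) := ⟨by omega⟩
  have hcop : ∀ i, Nat.Coprime (d i).val (2 * n) := by
    intro i
    rw [← ZMod.isUnit_iff_coprime, ZMod.natCast_zmod_val]
    exact hd i
  have hodd : ∀ i, ∃ k : ℕ, (d i).val = 2 * k + 1 := by
    intro i
    have h2 : Nat.Coprime (d i).val 2 := (hcop i).coprime_dvd_right ⟨n, rfl⟩
    exact (Nat.coprime_two_right.1 h2)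
  choose E hE using hodd
  let D : Fin n → ZMod n := fun i => ((d i).val : ZMod n)
  have hD : ∀ i, IsUnit (D i) := by
    intro i
    exact (ZMod.isUnit_iff_coprime _ _).2 ((hcop i).coprime_dvd_right ⟨2, by ring⟩)
  have hsub := subset_sums D hD Finset.univ
  rw [Finset.card_univ, Fintype.card_fin, min_eq_left (by omega)] at hsub
  have huniv : ((Finset.univ : Finset (Fin n)).powerset.image (fun s => ∑ i ∈ s, D i))
      = Finset.univ := by
    apply Finset.eq_univ_of_card
    rw [ZMod.card]
    refine le_antisymm ?_ hsub
    simpa [ZMod.card] using Finset.card_le_univ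
      ((Finset.univ : Finset (Fin n)).powerset.image (fun s => ∑ i ∈ s, D i))
  obtain ⟨T, -, hT⟩ := Finset.mem_image.1
    (huniv ▸ Finset.mem_univ (∑ i, (E i : ZMod n)))
  let c : Fin n → ZMod n := fun i => (E i : ZMod n) - if i ∈ T then D i else 0
  have hc : ∑ i, c i = 0 := by
    simp only [c, Finset.sum_sub_distrib, Finset.sum_ite_mem, Finset.univ_inter]
    rw [hT, sub_self]
  let e : ZMod n ≃ Fin n := Fintype.equivFinOfCardEq (ZMod.card n)
  obtain ⟨p, s, hps⟩ := hall_perm e c hc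
  have hlift : ∃ h : ZMod n →+ ZMod (2 * n), ∀ k : ℤ, h (k : ZMod n) = ((2 * k : ℤ) : ZMod (2 * n)) := by
    refine ⟨ZMod.lift n ⟨zmultiplesHom _ (2 : ZMod (2 * n)), ?_⟩, fun k => ?_⟩
    · have : ((2 * n : ℕ) : ZMod (2 * n)) = 0 := ZMod.natCast_self _
      push_cast at this
      simp only [zmultiplesHom_apply, zsmul_eq_mul]
      push_cast
      linear_combination this
    · rw [ZMod.lift_coe]
      simp [mul_comm]
  obtain ⟨h, hh⟩ := hlift
  have hinj : Function.Injective h := by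
    rw [injective_iff_map_eq_zero]
    intro x hx
    obtain ⟨k, rfl⟩ := ZMod.intCast_surjective x
    rw [hh, ZMod.intCast_zmod_eq_zero_iff_dvd] at hx
    rw [ZMod.intCast_zmod_eq_zero_iff_dvd]
    push_cast at hx
    exact (mul_dvd_mul_iff_left (by norm_num)).1 hx
  have hpar : ∀ x y, h x ≠ h y + 1 := by
    intro x y hxy
    obtain ⟨k, rfl⟩ := ZMod.intCast_surjective x
    obtain ⟨l, rfl⟩ := ZMod.intCast_surjective y
    have : ((2 * k - 2 * l - 1 : ℤ) : ZMod (2 * n)) = 0 := by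
      rw [hh, hh] at hxy
      rw [Int.cast_sub, Int.cast_sub, hxy]
      push_cast; ring
    rw [ZMod.intCast_zmod_eq_zero_iff_dvd] at this
    obtain ⟨m, hm⟩ := this
    push_cast at hm
    rw [mul_assoc] at hm
    omega
  have hdiff : ∀ i, h (c i) + 1 = d i ∨ h (c i) + 1 = - d i := by
    intro i
    have hdi : d i = ((2 * E i + 1 : ℤ) : ZMod (2 * n)) := by
      rw [← ZMod.natCast_zmod_val (d i), hE i]; push_cast; rfl
    by_cases hi : i ∈ T
    · right
      have : c i = ((-(E i : ℤ) - 1 : ℤ) : ZMod n) := by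
        simp only [c, D, hi, if_true, hE i]; push_cast; ring
      rw [this, hh, hdi]; push_cast; ring
    · left
      have : c i = ((E i : ℤ) : ZMod n) := by
        simp only [c, hi, if_false]; push_cast; ring
      rw [this, hh, hdi]; push_cast; ring
  refine ⟨fun i => h (e.symm i), fun i => h (p (e.symm i)) + 1, e.symm.trans s, ?_, ?_⟩
  · rw [Fintype.bijective_iff_injective_and_card]
    constructor
    · refine Function.Injective.sumElim ?_ ?_ ?_
      · intro i j hij
        exact e.symm.injective (hinj hij)
      · intro i j hij
        exact e.symm.injective (p.injective (hinj (add_right_cancel hij)))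
      · intro i j
        exact hpar _ _
    · rw [Fintype.card_sum, Fintype.card_fin, ZMod.card]; ring
  · intro i
    simp only [Equiv.trans_apply]
    rw [← hps, map_add]
    rcases hdiff (s (e.symm i)) with h1 | h1
    · right; rw [← h1]; ring
    · left; rw [← neg_eq_iff_eq_neg.2 h1]; ring
end

section
/- (Hall) Let A be a finite abelian group of order n, let a_1, ..., a_n be an enumeration of the elements of A, and let d_1, ..., d_n ∈ A satisfy d_1 + ... + d_n = 0. Then there exist permutations σ, τ ∈ S_n such that a_i - a_{σ(i)} = d_{τ(i)} for all i. -/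
lemma hall_split {ι : Type*} [DecidableEq ι] [Finite ι] (r : Equiv.Perm ι) (j k : ι) (hjk : j ≠ k) :
    ¬ r.SameCycle k j ∨ ¬ (Equiv.swap j k * r).SameCycle k j := by
  by_contra! hcon
  obtain ⟨h1, h2⟩ := hcon
  have hex : ∃ m : ℕ, (r ^ m) k = j := by
    obtain ⟨m, _, hm⟩ := h1.exists_pow_eq'
    exact ⟨m, hm⟩
  classical
  let M := Nat.find hex
  have hM : (r ^ M) k = j := Nat.find_spec hex
  have hmin : ∀ t < M, (r ^ t) k ≠ j := fun t ht => Nat.find_min hex ht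
  have hMpos : 0 < M := by
    rcases Nat.eq_zero_or_pos M with h | h
    · rw [h] at hM
      exact absurd hM.symm hjk
    · exact h
  have hnk : ∀ t, 0 < t → t < M → (r ^ t) k ≠ k := by
    intro t h0 ht hk
    apply hmin (M - t) (by omega)
    have : (r ^ (M - t + t)) k = j := by rw [Nat.sub_add_cancel ht.le, hM]
    rwa [pow_add, Equiv.Perm.mul_apply, hk] at this
  have hpow : ∀ t < M, ((Equiv.swap j k * r) ^ t) k = (r ^ t) k := by
    intro t
    induction t with
    | zero => simp
    | succ t ih =>
      intro ht
      rw [pow_succ', Equiv.Perm.mul_apply, ih (by omega), Equiv.Perm.mul_apply,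
        ← Equiv.Perm.mul_apply r, ← pow_succ']
      exact Equiv.swap_apply_of_ne_of_ne (hmin _ ht) (hnk _ (by omega) ht)
  have hret : ((Equiv.swap j k * r) ^ M) k = k := by
    obtain ⟨t, ht⟩ : ∃ t, M = t + 1 := ⟨M - 1, by omega⟩
    rw [ht, pow_succ', Equiv.Perm.mul_apply, hpow t (by omega), Equiv.Perm.mul_apply,
        ← Equiv.Perm.mul_apply r, ← pow_succ', ← ht, hM, Equiv.swap_apply_left]
  obtain ⟨m, _, hm⟩ := h2.exists_pow_eq'
  have hq : ∀ q : ℕ, (((Equiv.swap j k * r) ^ M) ^ q) k = k := by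
    intro q
    induction q with
    | zero => simp
    | succ q ih => rw [pow_succ, Equiv.Perm.mul_apply, hret, ih]
  rw [← Nat.mod_add_div m M, pow_add, pow_mul, Equiv.Perm.mul_apply, hq,
    hpow _ (Nat.mod_lt _ hMpos)] at hm
  exact hmin _ (Nat.mod_lt _ hMpos) hm

lemma hall_core {ι A : Type*} [DecidableEq ι] [Fintype ι] [AddCommGroup A] (x y : ι ≃ A)
    (d : ι → A) (j k : ι) (hjk : j ≠ k)
    (h : ∀ i, i ≠ j → i ≠ k → x i - y i = d i)
    (hs : x j + x k - y j - y k = d j + d k) (r : Equiv.Perm ι)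
    (hr : ∀ i, y (r i) = y j + y k + d k - x i)
    (hc : ¬ r.SameCycle k j) :
    ∃ x' y' : ι ≃ A, ∀ i, x' i - y' i = d i := by
  classical
  have hr' : ∀ i, x (r⁻¹ i) = y j + y k + d k - y i := by
    intro i
    have := hr (r⁻¹ i)
    rw [← Equiv.Perm.mul_apply, mul_inv_cancel, Equiv.Perm.one_apply] at this
    rw [this]; abel
  refine ⟨(r.cycleOf k)⁻¹.trans x, ((Equiv.swap j k).trans (r.cycleOf k)).trans y, ?_⟩
  intro i
  simp only [Equiv.trans_apply]
  rw [Equiv.Perm.cycleOf_inv]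
  have hc' : ¬ r⁻¹.SameCycle k j := by rwa [Equiv.Perm.sameCycle_inv]
  by_cases hij : i = j
  · subst hij
    rw [Equiv.swap_apply_left, Equiv.Perm.cycleOf_apply_self,
      Equiv.Perm.cycleOf_apply_of_not_sameCycle hc', hr]
    rw [← sub_eq_zero] at hs ⊢
    rw [← hs]; abel
  by_cases hik : i = k
  · subst hik
    rw [Equiv.swap_apply_right, Equiv.Perm.cycleOf_apply_self,
      Equiv.Perm.cycleOf_apply_of_not_sameCycle hc, hr']
    abel
  rw [Equiv.swap_apply_of_ne_of_ne hij hik]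
  by_cases hi : r.SameCycle k i
  · have hi' : r⁻¹.SameCycle k i := by rwa [Equiv.Perm.sameCycle_inv]
    rw [hi.cycleOf_apply, hi'.cycleOf_apply, hr, hr', ← h i hij hik]
    abel
  · have hi' : ¬ r⁻¹.SameCycle k i := by rwa [Equiv.Perm.sameCycle_inv]
    rw [Equiv.Perm.cycleOf_apply_of_not_sameCycle hi,
      Equiv.Perm.cycleOf_apply_of_not_sameCycle hi', h i hij hik]

lemma hall_step_s5 {ι A : Type*} [DecidableEq ι] [Fintype ι] [AddCommGroup A] (x y : ι ≃ A)
    (d : ι → A) (j k : ι) (hjk : j ≠ k)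
    (h : ∀ i, i ≠ j → i ≠ k → x i - y i = d i)
    (hs : x j + x k - y j - y k = d j + d k) :
    ∃ x' y' : ι ≃ A, ∀ i, x' i - y' i = d i := by
  let r : Equiv.Perm ι := (x.trans (Equiv.subLeft (y j + y k + d k))).trans y.symm
  have hr : ∀ i, y (r i) = y j + y k + d k - x i := by
    intro i
    simp [r]
  rcases hall_split r j k hjk with hc | hc
  · exact hall_core x y d j k hjk h hs r hr hc
  · refine hall_core x ((Equiv.swap j k).trans y) d j k hjk ?_ ?_ _ ?_ hc
    · intro i hij hik
      simp only [Equiv.trans_apply]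
      rw [Equiv.swap_apply_of_ne_of_ne hij hik, h i hij hik]
    · simp only [Equiv.trans_apply, Equiv.swap_apply_left, Equiv.swap_apply_right]
      rw [← hs]; abel
    · intro i
      simp only [Equiv.trans_apply, Equiv.swap_apply_left, Equiv.swap_apply_right,
        Equiv.Perm.mul_apply, Equiv.swap_apply_self, hr]
      abel

lemma hall_all {ι A : Type*} [DecidableEq ι] [Fintype ι] [AddCommGroup A] (a : ι ≃ A) (N : ℕ) :
    ∀ d : ι → A, d.support.ncard ≤ N → ∑ i, d i = 0 →
    ∃ x y : ι ≃ A, ∀ i, x i - y i = d i := by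
  induction N with
  | zero =>
    intro d hN _
    have h0 : d = 0 := by
      rw [Nat.le_zero, Set.ncard_eq_zero (Set.toFinite _)] at hN
      exact Function.support_eq_empty_iff.mp hN
    exact ⟨a, a, by simp [h0]⟩
  | succ N ih =>
    intro d hN hd
    by_cases h0 : ∀ i, d i = 0
    · exact ⟨a, a, by simp [h0]⟩
    push Not at h0
    obtain ⟨j, hj⟩ := h0
    obtain ⟨k, hkj, hk⟩ : ∃ k, k ≠ j ∧ d k ≠ 0 := by
      by_contra! hcon
      rw [Finset.sum_eq_single j (fun b _ hb => hcon b hb) (by simp)] at hd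
      exact hj hd
    let d0 : ι → A := d + Pi.single k (d j) - Pi.single j (d j)
    have hd0j : d0 j = 0 := by simp [d0, hkj.symm]
    have hd0k : d0 k = d k + d j := by simp [d0, hkj]
    have hd0 : ∀ i, i ≠ j → i ≠ k → d0 i = d i := by
      intro i h1 h2
      simp [d0, h1, h2]
    have hsub : d0.support ⊂ d.support := by
      refine ⟨?_, fun hle => hle (show j ∈ d.support from hj) hd0j⟩
      intro i hi
      by_cases hij : i = j
      · exact hij ▸ hj
      by_cases hik : i = k
      · exact hik ▸ hk
      rwa [Function.mem_support, hd0 i hij hik] at hi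
    have hlt := Set.ncard_lt_ncard hsub (Set.toFinite _)
    obtain ⟨x, y, hxy⟩ := ih d0 (by omega) (by
      simp [d0, Finset.sum_add_distrib, Finset.sum_sub_distrib, hd])
    refine hall_step_s5 x y d j k hkj.symm (fun i h1 h2 => by rw [hxy, hd0 i h1 h2]) ?_
    have e1 := hxy j
    have e2 := hxy k
    rw [hd0j] at e1
    rw [hd0k] at e2
    calc x j + x k - y j - y k = (x j - y j) + (x k - y k) := by abel
      _ = d j + d k := by rw [e1, e2]; abel

theorem hall_permutation_sums (A : Type*) [AddCommGroup A] [Fintype A] (n : ℕ)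
    (a : Fin n ≃ A) (d : Fin n → A) (hd : ∑ i, d i = 0) :
    ∃ σ τ : Equiv.Perm (Fin n), ∀ i, a i - a (σ i) = d (τ i) := by
  obtain ⟨x, y, h⟩ := hall_all a _ d le_rfl hd
  refine ⟨((a.trans x.symm).trans y).trans a.symm, a.trans x.symm, fun i => ?_⟩
  simp [← h]
end

section
/- Let N = 2n and let d_1, ..., d_n be odd residues modulo 2n with d_1 + ... + d_n ≡ n (mod 2n). Then there exists a numbering a_1, ..., a_n of the odd residues of Z/2n and a permutation σ ∈ S_n such that 2i - a_i ≡ d_{σ(i)} (mod 2n) for all i = 1, ..., n. -/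
lemma hall_cycle {G : Type*} [Finite G] [DecidableEq G] (g : Equiv.Perm G) (p q : G) (hpq : p ≠ q) :
    ∃ h : Equiv.Perm G, ¬ h.SameCycle q p ∧
      (∀ x, h x = g x ∨ (g x = p ∧ h x = q) ∨ (g x = q ∧ h x = p)) := by
  by_cases hc : g.SameCycle q p
  · refine ⟨Equiv.swap p q * g, ?_, ?_⟩
    · obtain ⟨m0, hm0⟩ : ∃ m : ℕ, (g ^ m) q = p := hc.exists_nat_pow_eq
      classical
      have hex : ∃ m : ℕ, (g ^ m) q = p := ⟨m0, hm0⟩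
      obtain ⟨m, hm, hmin⟩ : ∃ m : ℕ, (g ^ m) q = p ∧ ∀ k < m, (g ^ k) q ≠ p :=
        ⟨Nat.find hex, Nat.find_spec hex, fun k hk => Nat.find_min hex hk⟩
      have hmpos : 0 < m := by
        rcases Nat.eq_zero_or_pos m with h | h
        · subst h; exact absurd hm.symm hpq
        · exact h
      have hq : ∀ k, 0 < k → k < m → (g ^ k) q ≠ q := by
        intro k hk hkm he
        apply hmin (m - k) (by omega)
        have : (g ^ (m - k + k)) q = p := by rw [Nat.sub_add_cancel hkm.le]; exact hm
        rwa [pow_add, Equiv.Perm.mul_apply, he] at this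
      have key : ∀ j : ℕ, ∃ k < m, ((Equiv.swap p q * g) ^ j) q = (g ^ k) q := by
        intro j
        induction j with
        | zero => exact ⟨0, hmpos, rfl⟩
        | succ j ih =>
          obtain ⟨k, hk, he⟩ := ih
          rw [pow_succ', Equiv.Perm.mul_apply, he, Equiv.Perm.mul_apply,
            ← Equiv.Perm.mul_apply g, ← pow_succ']
          by_cases h1 : k + 1 = m
          · refine ⟨0, hmpos, ?_⟩
            rw [h1, hm]; simp
          · refine ⟨k + 1, by omega, ?_⟩
            exact Equiv.swap_apply_of_ne_of_ne (hmin _ (by omega)) (hq _ (by omega) (by omega))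
      intro hs
      obtain ⟨j, hj⟩ := hs.exists_nat_pow_eq
      obtain ⟨k, hk, he⟩ := key j
      exact hmin k hk (he ▸ hj)
    · intro x
      rw [Equiv.Perm.mul_apply]
      by_cases h1 : g x = p
      · right; left; simp [h1]
      · by_cases h2 : g x = q
        · right; right; simp [h2]
        · left; exact Equiv.swap_apply_of_ne_of_ne h1 h2
  · exact ⟨g, hc, fun x => Or.inl rfl⟩

lemma hall_step_s9 {G : Type*} [AddCommGroup G] [Finite G] (D D' : G → G) (p q : G) (hpq : p ≠ q)
    (hD : Function.Bijective fun x => x + D x)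
    (hne : ∀ x, x ≠ p → x ≠ q → D' x = D x) (hs : D' p + D' q = D p + D q) :
    ∃ π : Equiv.Perm G, Function.Bijective fun x => x + D' (π x) := by
  classical
  let M : Equiv.Perm G := Equiv.ofBijective _ hD
  have hM : ∀ x, M x = x + D x := fun x => rfl
  obtain ⟨K, hK⟩ : ∃ K, K = M p + M q - D' q := ⟨_, rfl⟩
  have hK' : K = p + q + D' p := by
    rw [hK, hM, hM]
    have : D' p = D p + D q - D' q := by rw [← hs]; abel
    rw [this]; abel
  let g : Equiv.Perm G := (Equiv.subLeft K).trans M.symm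
  have hg : ∀ x, M (g x) = K - x := fun x => by simp [g]
  obtain ⟨h, hnc, hh⟩ := hall_cycle g p q hpq
  let π := h.cycleOf q
  have hπ : ∀ x, h.SameCycle q x → π x = h x := fun x hx => hx.cycleOf_apply
  have hπ' : ∀ x, ¬ h.SameCycle q x → π x = x :=
    fun x hx => Equiv.Perm.cycleOf_apply_of_not_sameCycle hx
  refine ⟨π, (Finite.injective_iff_bijective).1 (Finite.injective_iff_surjective.2 ?_)⟩
  -- every reflected element of the cycle is hit
  have hp : p + D' (π p) = K - q := by rw [hπ' p hnc, hK']; abel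
  have hgz : ∀ w, h.SameCycle q w → h w ≠ q → g w = h w := by
    intro w hw hwq
    have hwp : h w ≠ p := fun e => hnc (e ▸ (Equiv.Perm.sameCycle_apply_right.2 hw))
    rcases hh w with h1 | ⟨_, h1⟩ | ⟨_, h1⟩
    · exact h1.symm
    · exact absurd h1 hwq
    · exact absurd h1 hwp
  have hρ : ∀ w, h.SameCycle q w → ∃ x, x + D' (π x) = K - w := by
    intro w hw
    by_cases hwq : w = q
    · exact ⟨p, by rw [hp, hwq]⟩
    · have hw' : h.SameCycle q (h.symm w) := by
        rw [← Equiv.Perm.sameCycle_apply_right]; simpa using hw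
      refine ⟨h.symm w, ?_⟩
      have hwp : w ≠ p := fun e => hnc (e ▸ hw)
      rw [hπ _ hw', Equiv.apply_symm_apply, hne w hwp hwq]
      have h1 := hgz _ hw' (by simpa using hwq)
      have h2 := hg (h.symm w)
      rw [h1, Equiv.apply_symm_apply, hM] at h2
      have h3 : D w = K - h.symm w - w := by rw [← h2]; abel
      rw [h3]; abel
  have hend : ∀ z, z = p ∨ z = q → ∃ x, x + D' (π x) = M z := by
    have hw' : h.SameCycle q (h.symm q) := by
      rw [← Equiv.Perm.sameCycle_apply_right, Equiv.apply_symm_apply]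
    obtain ⟨x, hx⟩ := hρ _ hw'
    have hy : h.symm q + D' (π (h.symm q)) = M p + M q - (K - h.symm q) := by
      rw [hπ _ hw', Equiv.apply_symm_apply, hK]; abel
    rw [← hg] at hx hy
    have hgw : g (h.symm q) = q ∨ g (h.symm q) = p := by
      rcases hh (h.symm q) with h1 | ⟨h1, _⟩ | ⟨h1, _⟩
      · left; rw [← h1]; simp
      · right; exact h1
      · left; exact h1
    rcases hgw with e | e <;> rw [e] at hx hy
    · rintro z (rfl | rfl)
      · exact ⟨_, hy.trans (by abel)⟩
      · exact ⟨_, hx⟩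
    · rintro z (rfl | rfl)
      · exact ⟨_, hx⟩
      · exact ⟨_, hy.trans (by abel)⟩
  intro y
  obtain ⟨z, rfl⟩ := M.surjective y
  by_cases hz : z = p ∨ z = q
  · exact hend z hz
  push Not at hz
  by_cases hc : h.SameCycle q z
  · have hw' : h.SameCycle q (h.symm z) := by
      rw [← Equiv.Perm.sameCycle_apply_right]; simpa using hc
    have h1 := hgz _ hw' (by simpa using hz.2)
    have h2 := hg (h.symm z)
    rw [h1, Equiv.apply_symm_apply] at h2
    rw [h2]
    exact hρ _ hw'
  · exact ⟨z, by simp only []; rw [hπ' z hc, hne z hz.1 hz.2, hM]⟩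

lemma hall_step' {G : Type*} [AddCommGroup G] [Finite G] (D D' : G → G) (p q : G) (hpq : p ≠ q)
    (hD : ∃ π : Equiv.Perm G, Function.Bijective fun x => x + D (π x))
    (hne : ∀ x, x ≠ p → x ≠ q → D' x = D x) (hs : D' p + D' q = D p + D q) :
    ∃ π : Equiv.Perm G, Function.Bijective fun x => x + D' (π x) := by
  obtain ⟨π, hπ⟩ := hD
  obtain ⟨τ, hτ⟩ := hall_step_s9 (fun x => D (π x)) (fun x => D' (π x)) (π.symm p) (π.symm q)
    (by simpa using hpq) hπ
    (fun x h1 h2 => hne _ (fun e => h1 (by simp [← e])) (fun e => h2 (by simp [← e])))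
    (by simpa using hs)
  exact ⟨τ.trans π, hτ⟩

lemma hall_main {G : Type*} [AddCommGroup G] [Fintype G] (D : G → G) (hD : ∑ x, D x = 0) :
    ∃ π : Equiv.Perm G, Function.Bijective fun x => x + D (π x) := by
  classical
  have key : ∀ s : Finset G, (0 : G) ∉ s → ∃ π : Equiv.Perm G, Function.Bijective
      fun x => x + (fun y => if y = 0 then - ∑ z ∈ s, D z else if y ∈ s then D y else 0) (π x) := by
    intro s
    let F : Finset G → G → G := fun s y => if y = 0 then - ∑ z ∈ s, D z else if y ∈ s then D y else 0
    change _ → ∃ π : Equiv.Perm G, Function.Bijective fun x => x + F s (π x)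
    induction s using Finset.induction_on with
    | empty =>
      intro _
      refine ⟨Equiv.refl _, ?_⟩
      simpa [F] using Function.bijective_id
    | insert a s ha ih =>
      intro h0
      simp only [Finset.mem_insert, not_or] at h0
      refine hall_step' (F s) (F (insert a s)) a 0 (Ne.symm h0.1) (ih h0.2) ?_ ?_
      · intro x hx hx0
        simp [F, hx, hx0]
      · simp [F, Ne.symm h0.1, ha, Finset.sum_insert ha]
  obtain ⟨π, hπ⟩ := key (Finset.univ.erase 0) (by simp)
  refine ⟨π, ?_⟩
  convert hπ using 4 with x
  have h := Finset.add_sum_erase Finset.univ D (Finset.mem_univ 0)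
  rw [hD] at h
  dsimp only
  split_ifs with h1 h2
  · rw [h1]; exact eq_neg_of_add_eq_zero_left h
  · rfl
  · simp [h1] at h2

theorem numbering_odd_residues (n : ℕ) (hn : 0 < n) (d : Fin n → ZMod (2 * n))
    (hd : ∀ i, Odd ((d i).val)) (hsum : ∑ i, d i = (n : ZMod (2 * n))) :
    ∃ (a : Fin n → ZMod (2 * n)) (σ : Equiv.Perm (Fin n)),
      Function.Injective a ∧ (∀ i, Odd ((a i).val)) ∧
      ∀ i, ((2 * (i.val + 1) : ℕ) : ZMod (2 * n)) - a i = d (σ i) := by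
  have : NeZero n := ⟨hn.ne'⟩
  have : NeZero (2 * n) := ⟨by omega⟩
  choose k hk using hd
  have hdk : ∀ i, d i = ((2 * k i + 1 : ℕ) : ZMod (2 * n)) := fun i => by
    rw [← hk, ZMod.natCast_val, ZMod.cast_id]
  have hsk : ∑ i, (k i : ZMod n) = 0 := by
    have h1 : ((∑ i, (2 * (k i : ℤ) + 1) - n : ℤ) : ZMod (2 * n)) = 0 := by
      push_cast
      rw [sub_eq_zero, ← hsum]
      exact Finset.sum_congr rfl fun i _ => by rw [hdk]; push_cast; rfl
    rw [ZMod.intCast_zmod_eq_zero_iff_dvd] at h1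
    rw [Finset.sum_add_distrib, ← Finset.mul_sum] at h1
    simp only [Finset.sum_const, Finset.card_univ, Fintype.card_fin, nsmul_eq_mul, mul_one,
      add_sub_cancel_right] at h1
    push_cast at h1
    have h2 := Int.dvd_of_mul_dvd_mul_left (by norm_num) h1
    have := (ZMod.intCast_zmod_eq_zero_iff_dvd _ n).2 h2
    push_cast at this
    exact this
  have hφ : Function.Bijective (fun i : Fin n => ((i.val : ZMod n) + 1)) := by
    rw [Fintype.bijective_iff_injective_and_card]
    refine ⟨fun i j hij => ?_, by simp [ZMod.card]⟩
    have h := add_right_cancel hij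
    rw [ZMod.natCast_eq_natCast_iff'] at h
    rw [Nat.mod_eq_of_lt i.2, Nat.mod_eq_of_lt j.2] at h
    exact Fin.ext h
  let φ : Fin n ≃ ZMod n := Equiv.ofBijective _ hφ
  obtain ⟨π, hπ⟩ := hall_main (fun x : ZMod n => - (k (φ.symm x) : ZMod n)) (by
    rw [Finset.sum_neg_distrib, neg_eq_zero, ← hsk]
    exact Equiv.sum_comp φ.symm fun i => (k i : ZMod n))
  let σ : Equiv.Perm (Fin n) := (φ.trans π).trans φ.symm
  refine ⟨fun i => ((2 * (i.val + 1) : ℕ) : ZMod (2 * n)) - d (σ i), σ, ?_, ?_, ?_⟩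
  · intro i j hij
    apply φ.injective
    apply hπ.injective
    simp only [hdk] at hij
    have h1 : (((2 : ℤ) * ((i.val + 1 - k (σ i)) - (j.val + 1 - k (σ j))) : ℤ) : ZMod (2 * n)) = 0 := by
      have := sub_eq_zero.2 hij
      rw [← this]; push_cast; ring
    rw [ZMod.intCast_zmod_eq_zero_iff_dvd] at h1
    push_cast at h1
    have h2 := Int.dvd_of_mul_dvd_mul_left (by norm_num) h1
    have h3 := (ZMod.intCast_zmod_eq_zero_iff_dvd _ n).2 h2
    push_cast at h3
    have h4 := sub_eq_zero.1 h3
    rw [sub_eq_add_neg, sub_eq_add_neg] at h4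
    exact h4
  · intro i
    rw [← ZMod.natCast_eq_one_iff_odd, ZMod.natCast_val]
    simp only [hdk]
    rw [← ZMod.castHom_apply (h := Dvd.intro n rfl) (R := ZMod 2), map_sub, map_natCast, map_natCast]
    push_cast
    have : (2 : ZMod 2) = 0 := rfl
    rw [this]; simp
  · intro i; simp
end
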